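/- Let u : ℝ → ℝ → ℝ be a smooth function of (x,t) with u_x(x,t) ≠ 0 for all (x,t), satisfying the Schwarzian Korteweg-de Vries equation u_t = u_{xxx} - (3/2)·u_{xx}²/u_x. Then the conservation law ∂_t(1/u_x) + ∂_x(u_{xxx}/u_x² - (1/2)·u_{xx}²/u_x³) = 0 holds for all (x,t). -/

import Mathlib

/-- Total `x`-derivative of a function of `(x, t)`. -/
noncomputable def dx (f : ℝ → ℝ → ℝ) : ℝ → ℝ → ℝ := fun x t => deriv (fun y => f y t) x

/-- Total `t`-derivative of a function of `(x, t)`. -/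
noncomputable def dt (f : ℝ → ℝ → ℝ) : ℝ → ℝ → ℝ := fun x t => deriv (fun s => f x s) t

/-- The Schwarzian Korteweg-de Vries equation. -/
def SKdV (u : ℝ → ℝ → ℝ) : Prop :=
  ∀ x t, dt u x t =
    dx (dx (dx u)) x t - (3/2) * (dx (dx u) x t)^2 / dx u x t

/-!
Write `R = u_xxx - (3/2) u_xx² / u_x`, so that the equation is `u_t = R`. Whatever the function `u`,
the flux satisfies `∂_x Φ^x = R_x / u_x²`: both sides equal
`(u_xxxx - 3 u_xx u_xxx / u_x + (3/2) u_xx³ / u_x²) / u_x²`. Symmetry of second derivatives gives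
`∂_t (1 / u_x) = -(u_t)_x / u_x²`, so the divergence `∂_t Φ^t + ∂_x Φ^x` is `-(u_t - R)_x / u_x²`.
-/

open Filter Topology Function

section NormedField

variable {𝕜 E F : Type*} [NontriviallyNormedField 𝕜] [NormedAddCommGroup E] [NormedSpace 𝕜 E]
  [NormedAddCommGroup F] [NormedSpace 𝕜 F]

theorem hasDerivAt_fst_of_hasFDerivAt_uncurry {f : 𝕜 → 𝕜 → F} {f' : 𝕜 × 𝕜 →L[𝕜] F} {x t : 𝕜}
    (hf : HasFDerivAt (uncurry f) f' (x, t)) : HasDerivAt (fun y => f y t) (f' (1, 0)) x :=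
  hf.comp_hasDerivAt (f := fun y => (y, t)) x ((hasDerivAt_id x).prodMk (hasDerivAt_const x t))

theorem hasDerivAt_snd_of_hasFDerivAt_uncurry {f : 𝕜 → 𝕜 → F} {f' : 𝕜 × 𝕜 →L[𝕜] F} {x t : 𝕜}
    (hf : HasFDerivAt (uncurry f) f' (x, t)) : HasDerivAt (fun s => f x s) (f' (0, 1)) t :=
  hf.comp_hasDerivAt (f := fun s => (x, s)) t ((hasDerivAt_const t x).prodMk (hasDerivAt_id t))

theorem eventually_differentiableAt_of_contDiffAt_one {g : E → F} {p : E}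
    (hg : ContDiffAt 𝕜 1 g p) : ∀ᶠ q in 𝓝 p, DifferentiableAt 𝕜 g q :=
  (hg.eventually (by simp)).mono fun _ hq => hq.differentiableAt one_ne_zero

theorem fderiv_fderiv_apply_const {g : E → F} {p : E} (hg : DifferentiableAt 𝕜 (fderiv 𝕜 g) p)
    (v w : E) : fderiv 𝕜 (fun q => fderiv 𝕜 g q v) p w = fderiv 𝕜 (fderiv 𝕜 g) p w v := by
  simp [fderiv_clm_apply hg (differentiableAt_const v)]

end NormedField

section PartialDerivatives

variable {f : ℝ → ℝ → ℝ} {x t : ℝ} {m n : WithTop ℕ∞}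

theorem dx_eq_fderiv_uncurry (hf : DifferentiableAt ℝ (uncurry f) (x, t)) :
    dx f x t = fderiv ℝ (uncurry f) (x, t) (1, 0) :=
  (hasDerivAt_fst_of_hasFDerivAt_uncurry hf.hasFDerivAt).deriv

theorem dt_eq_fderiv_uncurry (hf : DifferentiableAt ℝ (uncurry f) (x, t)) :
    dt f x t = fderiv ℝ (uncurry f) (x, t) (0, 1) :=
  (hasDerivAt_snd_of_hasFDerivAt_uncurry hf.hasFDerivAt).deriv

theorem hasDerivAt_dx (hf : DifferentiableAt ℝ (uncurry f) (x, t)) :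
    HasDerivAt (fun y => f y t) (dx f x t) x :=
  (hasDerivAt_fst_of_hasFDerivAt_uncurry hf.hasFDerivAt).differentiableAt.hasDerivAt

theorem hasDerivAt_dt (hf : DifferentiableAt ℝ (uncurry f) (x, t)) :
    HasDerivAt (fun s => f x s) (dt f x t) t :=
  (hasDerivAt_snd_of_hasFDerivAt_uncurry hf.hasFDerivAt).differentiableAt.hasDerivAt

theorem uncurry_dx_eventuallyEq_fderiv (hf : ContDiffAt ℝ 1 (uncurry f) (x, t)) :
    uncurry (dx f) =ᶠ[𝓝 (x, t)] fun p => fderiv ℝ (uncurry f) p (1, 0) :=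
  (eventually_differentiableAt_of_contDiffAt_one hf).mono fun _ => dx_eq_fderiv_uncurry

theorem uncurry_dt_eventuallyEq_fderiv (hf : ContDiffAt ℝ 1 (uncurry f) (x, t)) :
    uncurry (dt f) =ᶠ[𝓝 (x, t)] fun p => fderiv ℝ (uncurry f) p (0, 1) :=
  (eventually_differentiableAt_of_contDiffAt_one hf).mono fun _ => dt_eq_fderiv_uncurry

theorem contDiffAt_uncurry_dx (hf : ContDiffAt ℝ n (uncurry f) (x, t)) (hmn : m + 1 ≤ n) :
    ContDiffAt ℝ m (uncurry (dx f)) (x, t) :=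
  ((hf.fderiv_right hmn).clm_apply contDiffAt_const).congr_of_eventuallyEq
    (uncurry_dx_eventuallyEq_fderiv (hf.of_le (le_add_self.trans hmn)))

theorem contDiffAt_uncurry_dt (hf : ContDiffAt ℝ n (uncurry f) (x, t)) (hmn : m + 1 ≤ n) :
    ContDiffAt ℝ m (uncurry (dt f)) (x, t) :=
  ((hf.fderiv_right hmn).clm_apply contDiffAt_const).congr_of_eventuallyEq
    (uncurry_dt_eventuallyEq_fderiv (hf.of_le (le_add_self.trans hmn)))

theorem dt_dx_comm (hf : ContDiffAt ℝ 2 (uncurry f) (x, t)) :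
    dt (dx f) x t = dx (dt f) x t := by
  have hf₁ : ContDiffAt ℝ 1 (uncurry f) (x, t) := hf.of_le one_le_two
  have hfderiv : DifferentiableAt ℝ (fderiv ℝ (uncurry f)) (x, t) :=
    (hf.fderiv_right one_add_one_eq_two.le).differentiableAt one_ne_zero
  have hdx : DifferentiableAt ℝ (uncurry (dx f)) (x, t) :=
    (contDiffAt_uncurry_dx hf one_add_one_eq_two.le).differentiableAt one_ne_zero
  have hdt : DifferentiableAt ℝ (uncurry (dt f)) (x, t) :=
    (contDiffAt_uncurry_dt hf one_add_one_eq_two.le).differentiableAt one_ne_zero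
  have hsymm : IsSymmSndFDerivAt ℝ (uncurry f) (x, t) := hf.isSymmSndFDerivAt (by simp)
  calc dt (dx f) x t
    _ = fderiv ℝ (uncurry (dx f)) (x, t) (0, 1) := dt_eq_fderiv_uncurry hdx
    _ = fderiv ℝ (fderiv ℝ (uncurry f)) (x, t) (0, 1) (1, 0) := by
      rw [(uncurry_dx_eventuallyEq_fderiv hf₁).fderiv_eq, fderiv_fderiv_apply_const hfderiv]
    _ = fderiv ℝ (fderiv ℝ (uncurry f)) (x, t) (1, 0) (0, 1) := hsymm.eq _ _
    _ = fderiv ℝ (uncurry (dt f)) (x, t) (1, 0) := by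
      rw [(uncurry_dt_eventuallyEq_fderiv hf₁).fderiv_eq, fderiv_fderiv_apply_const hfderiv]
    _ = dx (dt f) x t := (dx_eq_fderiv_uncurry hdt).symm

end PartialDerivatives

section OneVariable

variable {𝕜 : Type*} [NontriviallyNormedField 𝕜] [NeZero (2 : 𝕜)] {a b c : 𝕜 → 𝕜} {d x : 𝕜}

theorem hasDerivAt_sub_three_halves_mul_sq_div (ha : HasDerivAt a (b x) x)
    (hb : HasDerivAt b (c x) x) (hc : HasDerivAt c d x) (hax : a x ≠ 0) :
    HasDerivAt (fun y => c y - (3 / 2) * b y ^ 2 / a y)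
      (d - 3 * b x * c x / a x + (3 / 2) * b x ^ 3 / a x ^ 2) x := by
  convert! hc.fun_sub (((hb.fun_pow 2).const_mul (3 / 2)).fun_div ha hax) using 1
  field_simp
  ring

theorem hasDerivAt_div_sq_sub_half_mul_sq_div_cube (ha : HasDerivAt a (b x) x)
    (hb : HasDerivAt b (c x) x) (hc : HasDerivAt c d x) (hax : a x ≠ 0) :
    HasDerivAt (fun y => c y / a y ^ 2 - (1 / 2) * b y ^ 2 / a y ^ 3)
      ((d - 3 * b x * c x / a x + (3 / 2) * b x ^ 3 / a x ^ 2) / a x ^ 2) x := by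
  convert! (hc.fun_div (ha.fun_pow 2) (pow_ne_zero 2 hax)).fun_sub
    (((hb.fun_pow 2).const_mul (1 / 2)).fun_div (ha.fun_pow 3) (pow_ne_zero 3 hax)) using 1
  field_simp
  ring

end OneVariable

/-- The right-hand side `u_xxx - (3/2) u_xx² / u_x` of the Schwarzian KdV equation. -/
noncomputable def skdvRhs (u : ℝ → ℝ → ℝ) : ℝ → ℝ → ℝ := fun x t =>
  dx (dx (dx u)) x t - (3 / 2) * (dx (dx u) x t) ^ 2 / dx u x t

/-- The flux `Φ^x` of the conservation law whose density is `Φ^t = 1 / u_x`. -/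
noncomputable def skdvFlux (u : ℝ → ℝ → ℝ) : ℝ → ℝ → ℝ := fun x t =>
  dx (dx (dx u)) x t / (dx u x t) ^ 2 - (1 / 2) * (dx (dx u) x t) ^ 2 / (dx u x t) ^ 3

section ConservationLaw

variable {u : ℝ → ℝ → ℝ} {x t : ℝ}

theorem dt_one_div_dx (hu : ContDiffAt ℝ 2 (uncurry u) (x, t)) (hux : dx u x t ≠ 0) :
    dt (fun x t => 1 / dx u x t) x t = -dx (dt u) x t / dx u x t ^ 2 := by
  have hdx : DifferentiableAt ℝ (uncurry (dx u)) (x, t) :=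
    (contDiffAt_uncurry_dx hu one_add_one_eq_two.le).differentiableAt one_ne_zero
  simp only [one_div, ← dt_dx_comm hu]
  exact ((hasDerivAt_dt hdx).fun_inv hux).deriv

theorem dx_skdvFlux (hu : ContDiffAt ℝ 4 (uncurry u) (x, t)) (hux : dx u x t ≠ 0) :
    dx (skdvFlux u) x t = dx (skdvRhs u) x t / dx u x t ^ 2 := by
  have hu₁ : ContDiffAt ℝ 3 (uncurry (dx u)) (x, t) :=
    contDiffAt_uncurry_dx hu (by norm_num)
  have hu₂ : ContDiffAt ℝ 2 (uncurry (dx (dx u))) (x, t) :=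
    contDiffAt_uncurry_dx hu₁ (by norm_num)
  have hu₃ : ContDiffAt ℝ 1 (uncurry (dx (dx (dx u)))) (x, t) :=
    contDiffAt_uncurry_dx hu₂ (by norm_num)
  have hux_deriv := hasDerivAt_dx (hu₁.differentiableAt (by simp))
  have huxx_deriv := hasDerivAt_dx (hu₂.differentiableAt (by simp))
  have huxxx_deriv := hasDerivAt_dx (hu₃.differentiableAt (by simp))
  have hrhs : dx (skdvRhs u) x t = _ :=
    (hasDerivAt_sub_three_halves_mul_sq_div hux_deriv huxx_deriv huxxx_deriv hux).deriv
  rw [hrhs]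
  exact (hasDerivAt_div_sq_sub_half_mul_sq_div_cube hux_deriv huxx_deriv huxxx_deriv hux).deriv

theorem skdv_conservation_law_general (hu : ContDiffAt ℝ 4 (uncurry u) (x, t))
    (hux : dx u x t ≠ 0) (heq : ∀ᶠ y in 𝓝 x, dt u y t = skdvRhs u y t) :
    dt (fun x t => 1 / dx u x t) x t + dx (skdvFlux u) x t = 0 := by
  have hdx_eq : dx (dt u) x t = dx (skdvRhs u) x t := EventuallyEq.deriv_eq heq
  rw [dt_one_div_dx (hu.of_le (by norm_num)) hux, dx_skdvFlux hu hux, hdx_eq]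
  ring

end ConservationLaw

/-- The conservation law `∂_t(1/u_x) + ∂_x(u_xxx/u_x² - u_xx²/(2u_x³)) = 0` for the
Schwarzian Korteweg-de Vries equation. -/
theorem skdv_conservation_law
    (u : ℝ → ℝ → ℝ)
    (hu : ContDiff ℝ (⊤ : ℕ∞) (fun p : ℝ × ℝ => u p.1 p.2))
    (hux : ∀ x t, dx u x t ≠ 0)
    (heq : SKdV u) :
    ∀ x t,
      dt (fun x t => 1 / dx u x t) x t +
      dx (fun x t => dx (dx (dx u)) x t / (dx u x t)^2
        - (1/2) * (dx (dx u) x t)^2 / (dx u x t)^3) x t = 0 :=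
  fun x t => skdv_conservation_law_general
    (hu.contDiffAt.of_le (WithTop.coe_le_coe.2 le_top)) (hux x t) (.of_forall fun y => heq y t)
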